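/- arXiv:1808.04642 — 5 statements merged into one kernel-verified Lean document; each statement's English description precedes it below -/
import Mathlib

section
/- Let (W,U,N) be a polarity, ε an order type over n, and R an f-type relation with order type ε. Then for all subsets X_j ⊆ W^ε(j) (1 ≤ j ≤ n) and every Y₀ ⊆ U, the set R⁰[X̄] ⊆ U is Galois-stable, and for each 1 ≤ i ≤ n the set Rⁱ[Y₀, X̄ⁱ] ⊆ W^ε(i) is Galois-stable. (Lemma 3.4, item 1.) -/
universe u

/-- For `X ⊆ W`, `up N X = X↑ = {u ∈ U : N x u for all x ∈ X}`. -/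
def up {W U : Type u} (N : W → U → Prop) (X : Set W) : Set U := {u | ∀ x ∈ X, N x u}

/-- For `Y ⊆ U`, `dn N Y = Y↓ = {w ∈ W : N w u for all u ∈ Y}`. -/
def dn {W U : Type u} (N : W → U → Prop) (Y : Set U) : Set W := {w | ∀ u ∈ Y, N w u}

/-- A subset `X ⊆ W` is Galois-stable if `X = (X↑)↓`. -/
def stableW {W U : Type u} (N : W → U → Prop) (X : Set W) : Prop := X = dn N (up N X)

/-- A subset `Y ⊆ U` is Galois-stable if `Y = (Y↓)↑`. -/
def stableU {W U : Type u} (N : W → U → Prop) (Y : Set U) : Prop := Y = up N (dn N Y)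

/-- `coordType W U b` is `W` if `b = true` (order type 1) and `U` if `b = false` (order type ∂). -/
def coordType (W U : Type u) (b : Bool) : Type u := cond b W U

/-- `S⁰[C̄] = {a : (a, b̄) ∈ S for all b̄ ∈ C₁ × ⋯ × Cₙ}`. -/
def rel0 {A : Type u} {n : ℕ} {B : Fin n → Type u} (S : A → (∀ i, B i) → Prop)
    (C : ∀ i, Set (B i)) : Set A :=
  {a | ∀ b : ∀ i, B i, (∀ i, b i ∈ C i) → S a b}

/-- `Sⁱ[A', C̄ⁱ] = {x ∈ B i : (a, b̄ⁱ_x) ∈ S for all a ∈ A' and all b_j ∈ C_j (j ≠ i)}`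
(the `i`-th entry of `C` is ignored). -/
def reli {A : Type u} {n : ℕ} {B : Fin n → Type u} (S : A → (∀ i, B i) → Prop)
    (i : Fin n) (A' : Set A) (C : ∀ j, Set (B j)) : Set (B i) :=
  {x | ∀ a ∈ A', ∀ b : ∀ j, B j, (∀ j, j ≠ i → b j ∈ C j) → S a (Function.update b i x)}

/-- Galois-stability for a subset of `W^ε(i)` (as a subset of `W` or of `U` accordingly). -/
def coordStable {W U : Type u} (N : W → U → Prop) :
    (b : Bool) → Set (coordType W U b) → Prop
  | true, X => stableW N X
  | false, Y => stableU N Y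

/-- `R` is an f-type relation with order type `ε`: `R ⊆ U × W^ε(1) × ⋯ × W^ε(n)` such that the
sets `R⁰[{w̄}]` and `Rⁱ[{u}, {w̄}ⁱ]` are all Galois-stable. -/
def isFType {W U : Type u} (N : W → U → Prop) {n : ℕ} (ε : Fin n → Bool)
    (R : U → (∀ i, coordType W U (ε i)) → Prop) : Prop :=
  (∀ w : ∀ i, coordType W U (ε i),
    stableU N (rel0 R fun i => ({w i} : Set (coordType W U (ε i))))) ∧
  (∀ (u : U) (w : ∀ i, coordType W U (ε i)) (i : Fin n),
    coordStable N (ε i) (reli R i {u} fun j => ({w j} : Set (coordType W U (ε j)))))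

/-!
The sets `R⁰[X̄]` and `Rⁱ[Y₀, X̄ⁱ]` are cut out by a condition on all points of a product, so they
are intersections of the corresponding sets for singletons. The latter are Galois-stable since `R`
is f-type, and the fixed points of a closure operator are closed under arbitrary intersections.
-/

section Stability

variable {W U : Type u} {N : W → U → Prop}

theorem stableW_iff_isExtent {X : Set W} : stableW N X ↔ Order.IsExtent N X :=
  eq_comm.trans Order.isExtent_iff.symm

theorem stableU_iff_isIntent {Y : Set U} : stableU N Y ↔ Order.IsIntent N Y :=
  eq_comm.trans Order.isIntent_iff.symm

variable {ι : Sort*} {κ : ι → Sort*}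

theorem stableW_iInter₂ {F : ∀ k, κ k → Set W} (hF : ∀ k l, stableW N (F k l)) :
    stableW N (⋂ (k) (l), F k l) :=
  stableW_iff_isExtent.2 <| .iInter₂ F fun k l => stableW_iff_isExtent.1 (hF k l)

theorem stableU_iInter₂ {F : ∀ k, κ k → Set U} (hF : ∀ k l, stableU N (F k l)) :
    stableU N (⋂ (k) (l), F k l) :=
  stableU_iff_isIntent.2 <| .iInter₂ F fun k l => stableU_iff_isIntent.1 (hF k l)

theorem coordStable_iInter₂ : ∀ {b : Bool} {F : ∀ k, κ k → Set (coordType W U b)},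
    (∀ k l, coordStable N b (F k l)) → coordStable N b (⋂ (k) (l), F k l)
  | true, _, hF => stableW_iInter₂ hF
  | false, _, hF => stableU_iInter₂ hF

end Stability

section RelationSections

variable {A : Type u} {n : ℕ} {B : Fin n → Type u} (S : A → (∀ i, B i) → Prop)

theorem mem_rel0_singleton {a : A} {b : ∀ i, B i} : a ∈ rel0 S (fun i => {b i}) ↔ S a b :=
  ⟨fun h => h b fun _ => rfl, fun h _ hc => funext hc ▸ h⟩

theorem mem_reli_singleton {i : Fin n} {a : A} {b : ∀ j, B j} {x : B i} :
    x ∈ reli S i {a} (fun j => {b j}) ↔ S a (Function.update b i x) := by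
  refine ⟨fun h => h a rfl b fun _ _ => rfl, ?_⟩
  rintro h _ rfl c hc
  have update_eq : Function.update c i x = Function.update b i x :=
    Function.update_eq_iff.2 ⟨by simp, fun j hj => by simpa [hj] using hc j hj⟩
  rwa [update_eq]

theorem rel0_eq_biInter (C : ∀ i, Set (B i)) :
    rel0 S C = ⋂ b ∈ Set.univ.pi C, rel0 S fun i => {b i} := by
  ext a
  simp only [Set.mem_iInter, Set.mem_univ_pi, mem_rel0_singleton]
  rfl

theorem reli_eq_biInter (i : Fin n) (A' : Set A) (C : ∀ j, Set (B j)) :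
    reli S i A' C = ⋂ a ∈ A', ⋂ b ∈ Set.pi {i}ᶜ C, reli S i {a} fun j => {b j} := by
  ext x
  simp only [Set.mem_iInter, mem_reli_singleton]
  rfl

end RelationSections

/-- Lemma 3.4, item 1: for an f-type relation `R` with order type `ε`, the sets `R⁰[X̄]` and
`Rⁱ[Y₀, X̄ⁱ]` are Galois-stable for all subsets `X_j ⊆ W^ε(j)` and `Y₀ ⊆ U`. -/
theorem fType_rel_stable {W U : Type u} (N : W → U → Prop) {n : ℕ} (ε : Fin n → Bool)
    (R : U → (∀ i, coordType W U (ε i)) → Prop) (hR : isFType N ε R)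
    (X : ∀ i, Set (coordType W U (ε i))) (Y₀ : Set U) :
    stableU N (rel0 R X) ∧ ∀ i : Fin n, coordStable N (ε i) (reli R i Y₀ X) := by
  refine ⟨?_, fun i => ?_⟩
  · rw [rel0_eq_biInter]
    exact stableU_iInter₂ fun w _ => hR.1 w
  · rw [reli_eq_biInter]
    exact coordStable_iInter₂ fun u _ => coordStable_iInter₂ fun w _ => hR.2 u w i
end

section
/- Let (W,U,N) be a polarity, ε an order type over n, R an f-type relation with order type ε, and 1 ≤ i ≤ n with ε(i) = 1. Suppose that for every j ≠ i the set X_j ⊆ W^ε(j) is Galois-stable. Then for every Z ⊆ W, R⁰[X̄ⁱ_Z] = R⁰[X̄ⁱ_{(Z↑)↓}]. (Lemma 3.5, item 1(i).) -/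
universe u

/-- The Galois closure on subsets of `W^ε(i)`: `(·↑)↓` on subsets of `W`, `(·↓)↑` on subsets
of `U`. -/
def coordCl {W U : Type u} (N : W → U → Prop) :
    (b : Bool) → Set (coordType W U b) → Set (coordType W U b)
  | true, X => dn N (up N X)
  | false, Y => up N (dn N Y)

/-!
`R⁰` and `Rⁱ` are adjoint: `Y ⊆ R⁰[X̄ⁱ_Z]` exactly when `Z ⊆ Rⁱ[Y, X̄ⁱ]`. The set `Rⁱ[Y, X̄ⁱ]` is
an intersection of sections `Rⁱ[{u}, {w̄}ⁱ]`, each of them Galois-stable, so it is Galois-stable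
too, and thus contains `Z` if and only if it contains the closure of `Z`.
-/

/-- The Galois closure `coordCl N b`, bundled as a closure operator so that the order-theoretic
library applies to it. -/
def coordClosure {W U : Type u} (N : W → U → Prop) :
    (b : Bool) → ClosureOperator (Set (coordType W U b))
  | true => (gc_upperPolar_lowerPolar N).closureOperator
  | false => (gc_lowerPolar_upperPolar N).closureOperator

theorem coordClosure_apply {W U : Type u} (N : W → U → Prop) (b : Bool)
    (Z : Set (coordType W U b)) : coordClosure N b Z = coordCl N b Z := by
  cases b <;> rfl

theorem isClosed_coordClosure_iff {W U : Type u} (N : W → U → Prop) (b : Bool)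
    (Z : Set (coordType W U b)) : (coordClosure N b).IsClosed Z ↔ coordStable N b Z := by
  refine (coordClosure N b).isClosed_iff.trans ?_
  cases b <;> exact eq_comm

section Relation

variable {A : Type u} {n : ℕ} {B : Fin n → Type u} (S : A → (∀ j, B j) → Prop) (i : Fin n)

theorem subset_rel0_update_iff (A' : Set A) (C : ∀ j, Set (B j)) (Z : Set (B i)) :
    A' ⊆ rel0 S (Function.update C i Z) ↔ Z ⊆ reli S i A' C := by
  constructor
  · intro h z hz a ha b hb
    refine h ha _ fun j => ?_
    rcases eq_or_ne j i with rfl | hj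
    · simpa using hz
    · simpa [hj] using hb j hj
  · intro h a ha b hb
    have hbi : b i ∈ Z := by simpa using hb i
    have hbC : ∀ j, j ≠ i → b j ∈ C j := fun j hj => by simpa [hj] using hb j
    simpa using h hbi a ha b hbC

theorem reli_eq_iInter_singleton (A' : Set A) (C : ∀ j, Set (B j)) :
    reli S i A' C =
      ⋂ a ∈ A', ⋂ (w : ∀ j, B j) (_ : ∀ j, j ≠ i → w j ∈ C j), reli S i {a} fun j => {w j} := by
  ext x
  simp only [Set.mem_iInter]
  constructor
  · rintro h a ha w hw _ rfl b hb
    exact h _ ha b fun j hj => Set.mem_singleton_iff.1 (hb j hj) ▸ hw j hj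
  · exact fun h a ha b hb => h a ha b hb a rfl b fun _ _ => rfl

variable {S i}

theorem isClosed_reli_of_singleton {c : ClosureOperator (Set (B i))}
    (hS : ∀ a (w : ∀ j, B j), c.IsClosed (reli S i {a} fun j => {w j}))
    (A' : Set A) (C : ∀ j, Set (B j)) : c.IsClosed (reli S i A' C) := by
  rw [reli_eq_iInter_singleton, c.isClosed_iff_closure_le]
  refine Set.subset_iInter₂ fun a ha => Set.subset_iInter₂ fun w hw => ?_
  exact c.closure_min ((Set.iInter₂_subset a ha).trans (Set.iInter₂_subset w hw)) (hS a w)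

theorem fType_rel0_closure_one_general {c : ClosureOperator (Set (B i))}
    (hS : ∀ a (w : ∀ j, B j), c.IsClosed (reli S i {a} fun j => {w j}))
    (C : ∀ j, Set (B j)) (Z : Set (B i)) :
    rel0 S (Function.update C i Z) = rel0 S (Function.update C i (c Z)) := by
  refine eq_of_forall_le_iff fun A' => ?_
  calc
    A' ⊆ rel0 S (Function.update C i Z) ↔ Z ⊆ reli S i A' C :=
        subset_rel0_update_iff S i A' C Z
    _ ↔ c Z ⊆ reli S i A' C :=
        (isClosed_reli_of_singleton hS A' C).closure_le_iff.symm
    _ ↔ A' ⊆ rel0 S (Function.update C i (c Z)) :=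
        (subset_rel0_update_iff S i A' C (c Z)).symm

end Relation

/-- Lemma 3.5, item 1(i): if `ε(i) = 1` and `X_j` is Galois-stable for all `j ≠ i`, then for
every `Z ⊆ W`, `R⁰[X̄ⁱ_Z] = R⁰[X̄ⁱ_{(Z↑)↓}]`. -/
theorem fType_rel0_closure_one {W U : Type u} (N : W → U → Prop) {n : ℕ} (ε : Fin n → Bool)
    (R : U → (∀ i, coordType W U (ε i)) → Prop) (hR : isFType N ε R)
    (i : Fin n) (hi : ε i = true)
    (X : ∀ j, Set (coordType W U (ε j)))
    (hX : ∀ j, j ≠ i → coordStable N (ε j) (X j))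
    (Z : Set (coordType W U (ε i))) :
    rel0 R (Function.update X i Z) = rel0 R (Function.update X i (coordCl N (ε i) Z)) := by
  rw [← coordClosure_apply]
  exact fType_rel0_closure_one_general
    (fun u w => (isClosed_coordClosure_iff N (ε i) _).2 (hR.2 u w i)) X Z
end

section
/- Let (W,U,N) be a polarity, ε an order type over n, g : U^ε(1) × ⋯ × U^ε(n) → U a function admitting residual functions k_i as in the context, and R the relation defined by (w, ū) ∈ R iff (w, g(ū)) ∈ N. Then for every w ∈ W and every tuple ū: R⁰[{ū}] = ({g(ū)})↓, and for each 1 ≤ i ≤ n, Rⁱ[{w}, {ū}ⁱ] equals ({k_i(ūⁱ,w)})↑ if ε(i) = 1 and equals ({k_i(ūⁱ,w)})↓ if ε(i) = ∂. In particular all these sets are Galois-stable, so R is a g-type relation with order type ε. (Content of Proposition 4.3 for functional relations, dual case.) -/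
universe u

/-- Galois-stability for a subset of `U^ε(i)` (as a subset of `U` or of `W` accordingly). -/
def coordStableG {W U : Type u} (N : W → U → Prop) :
    (b : Bool) → Set (coordType U W b) → Prop
  | true, Y => stableU N Y
  | false, X => stableW N X

/-- `R` is a g-type relation with order type `ε`: `R ⊆ W × U^ε(1) × ⋯ × U^ε(n)` such that the
sets `R⁰[{ū}]` and `Rⁱ[{w}, {ū}ⁱ]` are all Galois-stable. -/
def isGType {W U : Type u} (N : W → U → Prop) {n : ℕ} (ε : Fin n → Bool)
    (R : W → (∀ i, coordType U W (ε i)) → Prop) : Prop :=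
  (∀ v : ∀ i, coordType U W (ε i),
    stableW N (rel0 R fun i => ({v i} : Set (coordType U W (ε i))))) ∧
  (∀ (w : W) (v : ∀ i, coordType U W (ε i)) (i : Fin n),
    coordStableG N (ε i) (reli R i {w} fun j => ({v j} : Set (coordType U W (ε j)))))

/-- `pairNG N (ε i) u k` is `(k_i(ūⁱ,w), u_i) ∈ N` if `ε(i) = 1`, and `(u_i, k_i(ūⁱ,w)) ∈ N`
if `ε(i) = ∂`. -/
def pairNG {W U : Type u} (N : W → U → Prop) :
    (b : Bool) → coordType U W b → coordType W U b → Prop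
  | true, v, w => N w v
  | false, w, v => N w v

/-- The Galois-stable set `{k_i(ūⁱ,w)}↑` (if `ε(i) = 1`) or `{k_i(ūⁱ,w)}↓` (if `ε(i) = ∂`). -/
def singG {W U : Type u} (N : W → U → Prop) :
    (b : Bool) → coordType W U b → Set (coordType U W b)
  | true, w => up N {w}
  | false, v => dn N {v}

/-!
Fix `w` and all coordinates of `ū` but the `i`-th. Since `k_i` does not see the `i`-th coordinate,
residuation turns `N w (g ū)` into an incidence of that coordinate with a fixed point, so the
`i`-th section of the relation is the polar of a singleton; a polar is Galois-stable because
taking polars three times is the same as taking them once.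
-/

section Polarity

variable {W U : Type u} (N : W → U → Prop)

theorem stableW_dn (Y : Set U) : stableW N (dn N Y) :=
  (lowerPolar_upperPolar_lowerPolar N Y).symm

theorem stableU_up (X : Set W) : stableU N (up N X) :=
  (upperPolar_lowerPolar_upperPolar N X).symm

theorem dn_singleton (y : U) : dn N {y} = {w | N w y} :=
  Set.ext fun _ => mem_lowerPolar_singleton N

theorem up_singleton (x : W) : up N {x} = {y | N x y} :=
  Set.ext fun _ => mem_upperPolar_singleton N

theorem coordStableG_singG : ∀ (b : Bool) (c : coordType W U b), coordStableG N b (singG N b c)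
  | true, x => stableU_up N {x}
  | false, y => stableW_dn N {y}

theorem singG_eq_setOf_pairNG :
    ∀ (b : Bool) (c : coordType W U b), singG N b c = {x | pairNG N b x c}
  | true, x => up_singleton N x
  | false, y => dn_singleton N y

end Polarity

section Sections

variable {A : Type u} {n : ℕ} {B : Fin n → Type u} (S : A → (∀ i, B i) → Prop)

theorem rel0_singleton (v : ∀ i, B i) : rel0 S (fun i => {v i}) = {a | S a v} := by
  ext a
  refine ⟨fun h => h v fun _ => rfl, fun h b hb => ?_⟩
  obtain rfl : b = v := funext hb
  exact h

theorem reli_singleton (i : Fin n) (a : A) (v : ∀ i, B i) :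
    reli S i {a} (fun j => {v j}) = {x | S a (Function.update v i x)} := by
  ext x
  refine ⟨fun h => h a rfl v fun _ _ => rfl, ?_⟩
  rintro h _ rfl b hb
  have update_eq : Function.update b i x = Function.update v i x :=
    Function.eq_update_iff.2
      ⟨Function.update_self i x b, fun j hj => (Function.update_of_ne hj x b).trans (hb j hj)⟩
  rwa [update_eq]

end Sections

section Functional

variable {W U : Type u} (N : W → U → Prop) {n : ℕ}

/-- The relation `(w, ū) ∈ R ↔ (w, g ū) ∈ N` induced by a `U`-valued function `g`. -/
def functionalRel {B : Fin n → Type u} (g : (∀ i, B i) → U) (w : W) (v : ∀ i, B i) : Prop :=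
  N w (g v)

/-- `k` is the residual `k_i` of `g` in its `i`-th argument. The tuple `ūⁱ` with the `i`-th entry
omitted is encoded as a function on `{j // j ≠ i}`. -/
def IsResidual (ε : Fin n → Bool) (g : (∀ i, coordType U W (ε i)) → U) (i : Fin n)
    (k : (∀ j : {j : Fin n // j ≠ i}, coordType U W (ε j)) → W → coordType W U (ε i)) : Prop :=
  ∀ (v : ∀ j, coordType U W (ε j)) (w : W),
    N w (g v) ↔ pairNG N (ε i) (v i) (k (fun j => v j) w)

theorem rel0_functionalRel {B : Fin n → Type u} (g : (∀ i, B i) → U) (v : ∀ i, B i) :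
    rel0 (functionalRel N g) (fun i => {v i}) = dn N {g v} :=
  (rel0_singleton _ v).trans (dn_singleton N (g v)).symm

variable {N} {ε : Fin n → Bool} {g : (∀ i, coordType U W (ε i)) → U}

theorem IsResidual.functionalRel_update_iff {i : Fin n}
    {k : (∀ j : {j : Fin n // j ≠ i}, coordType U W (ε j)) → W → coordType W U (ε i)}
    (hk : IsResidual N ε g i k) (w : W) (v : ∀ j, coordType U W (ε j))
    (x : coordType U W (ε i)) :
    functionalRel N g w (Function.update v i x) ↔ pairNG N (ε i) x (k (fun j => v j) w) := by
  have restrict_update : (fun j : {j : Fin n // j ≠ i} => Function.update v i x j) =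
      fun j : {j : Fin n // j ≠ i} => v j :=
    funext fun j => Function.update_of_ne j.2 x v
  rw [functionalRel, hk, restrict_update, Function.update_self]

theorem IsResidual.reli_functionalRel {i : Fin n}
    {k : (∀ j : {j : Fin n // j ≠ i}, coordType U W (ε j)) → W → coordType W U (ε i)}
    (hk : IsResidual N ε g i k) (w : W) (v : ∀ j, coordType U W (ε j)) :
    reli (functionalRel N g) i {w} (fun j => {v j}) = singG N (ε i) (k (fun j => v j) w) := by
  rw [reli_singleton, singG_eq_setOf_pairNG]
  exact Set.ext (hk.functionalRel_update_iff w v)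

theorem isGType_functionalRel
    {k : ∀ i : Fin n,
      (∀ j : {j : Fin n // j ≠ i}, coordType U W (ε j)) → W → coordType W U (ε i)}
    (hk : ∀ i, IsResidual N ε g i (k i)) : isGType N ε (functionalRel N g) := by
  refine ⟨fun v => ?_, fun w v i => ?_⟩
  · rw [rel0_functionalRel]
    exact stableW_dn N {g v}
  · rw [(hk i).reli_functionalRel]
    exact coordStableG_singG N (ε i) _

end Functional

/-- Proposition 4.3 (functional relations, `g` case): if `g` admits residual functions `k_i`,
and `R` is defined by `(w, ū) ∈ R iff (w, g(ū)) ∈ N`, then `R⁰[{ū}] = ({g(ū)})↓`,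
`Rⁱ[{w}, {ū}ⁱ] = ({k_i(ūⁱ,w)})↑` if `ε(i) = 1` and `= ({k_i(ūⁱ,w)})↓` if `ε(i) = ∂`; in
particular `R` is a g-type relation with order type `ε`. -/
theorem functional_is_gType {W U : Type u} (N : W → U → Prop) {n : ℕ} (ε : Fin n → Bool)
    (g : (∀ i, coordType U W (ε i)) → U)
    (k : ∀ i : Fin n,
      ((∀ j : {j : Fin n // j ≠ i}, coordType U W (ε j.1)) → W → coordType W U (ε i)))
    (hres : ∀ (i : Fin n) (v : ∀ j, coordType U W (ε j)) (w : W),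
      N w (g v) ↔ pairNG N (ε i) (v i) (k i (fun j => v j.1) w)) :
    (∀ v : ∀ i, coordType U W (ε i),
      rel0 (fun (w : W) v' => N w (g v'))
          (fun i => ({v i} : Set (coordType U W (ε i)))) = dn N {g v}) ∧
    (∀ (w : W) (v : ∀ i, coordType U W (ε i)) (i : Fin n),
      reli (fun (w' : W) v' => N w' (g v')) i {w}
          (fun j => ({v j} : Set (coordType U W (ε j))))
        = singG N (ε i) (k i (fun j => v j.1) w)) ∧
    isGType N ε (fun (w : W) v' => N w (g v')) := by
  have hk (i : Fin n) : IsResidual N ε g i (k i) := hres i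
  exact ⟨rel0_functionalRel N g, fun w v i => (hk i).reli_functionalRel w v,
    isGType_functionalRel hk⟩
end

section
/- Let (W,U,N) be a polarity, ε an order type over n, and f : W^ε(1) × ⋯ × W^ε(n) → W a function admitting residual functions h_i as in the context. Let X_i, Z_i ⊆ W^ε(i) for 1 ≤ i ≤ n, and suppose X_i^∂ ⊆ Z_i^∂ for every i. Then every u ∈ U such that (f(x̄), u) ∈ N for all x̄ ∈ X₁ × ⋯ × Xₙ also satisfies (f(z̄), u) ∈ N for all z̄ ∈ Z₁ × ⋯ × Zₙ; that is, ({f(x̄) : x̄ ∈ X̄})↑ ⊆ R⁰[Z̄], where R is the relation defined by (u, w̄) ∈ R iff (f(w̄), u) ∈ N. (Lemma 4.7, item 1, for functional relations.) -/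
universe u

/-- `pairN N (ε i) w h` is `(w_i, h_i(w̄ⁱ,u)) ∈ N` if `ε(i) = 1`, and `(h_i(w̄ⁱ,u), w_i) ∈ N`
if `ε(i) = ∂`. -/
def pairN {W U : Type u} (N : W → U → Prop) :
    (b : Bool) → coordType W U b → coordType U W b → Prop
  | true, w, v => N w v
  | false, v, w => N w v

/-- `C^∂` for `C ⊆ W^ε(i)`: `C↑ ⊆ U` if `ε(i) = 1`, and `C↓ ⊆ W` if `ε(i) = ∂`. -/
def coordDualF {W U : Type u} (N : W → U → Prop) :
    (b : Bool) → Set (coordType W U b) → Set (coordType U W b)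
  | true, X => up N X
  | false, Y => dn N Y

/-! Replace the sets `X i` by the `Z i` one coordinate at a time. With all other coordinates fixed,
the admissible values of the `i`-th coordinate form the dual, in the direction opposite to `∂`
(`coordDualF (flip N)`), of some set `V`; a residual function supplies a singleton `V`. By the
Galois connection this dual contains `C` exactly when `V ⊆ C^∂`, so `X_i^∂ ⊆ Z_i^∂` makes it
contain `Z i` whenever it contains `X i`. -/

section CoordinateExchange

open Function Set

variable {ι : Type*} [DecidableEq ι] {B : ι → Type*} {S : Set (∀ i, B i)}

lemma univ_pi_update_subset_iff {C : ∀ i, Set (B i)} {i : ι} {D : Set (B i)} :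
    univ.pi (update C i D) ⊆ S ↔ ∀ w ∈ ({i}ᶜ : Set ι).pi C, D ⊆ update w i ⁻¹' S := by
  have hpi : univ.pi (update C i D) = {w | w i ∈ D} ∩ ({i}ᶜ : Set ι).pi C :=
    univ_pi_update i C D fun _ s => s
  rw [hpi]
  constructor
  · intro hS w hw d hd
    have hoff : update w i d ∈ ({i}ᶜ : Set ι).pi C := fun j hj => by
      simpa only [update_of_ne hj] using hw j hj
    exact hS ⟨by rwa [mem_ofPred_eq, update_self], hoff⟩
  · rintro hS w ⟨hwi, hw⟩
    simpa only [mem_preimage, update_eq_self] using hS w hw hwi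

lemma univ_pi_subset_of_forall_update_preimage [Finite ι] {X Z : ∀ i, Set (B i)}
    (hXZ : ∀ i w, X i ⊆ update w i ⁻¹' S → Z i ⊆ update w i ⁻¹' S) (hX : univ.pi X ⊆ S) :
    univ.pi Z ⊆ S := by
  cases nonempty_fintype ι
  suffices hpiecewise : ∀ s : Finset ι, univ.pi (s.piecewise Z X) ⊆ S by
    simpa only [Finset.piecewise_univ] using hpiecewise Finset.univ
  intro s
  induction s using Finset.induction_on with
  | empty => rwa [Finset.piecewise_empty]
  | insert i s hi ih =>
    rw [← update_eq_self i (s.piecewise Z X), Finset.piecewise_eq_of_notMem s Z X hi,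
      univ_pi_update_subset_iff] at ih
    rw [Finset.piecewise_insert, univ_pi_update_subset_iff]
    exact fun w hw => hXZ i w (ih w hw)

end CoordinateExchange

section CoordDual

variable {W U : Type u} {N : W → U → Prop}

lemma mem_coordDualF_flip_iff {b : Bool} {V : Set (coordType U W b)} {c : coordType W U b} :
    c ∈ coordDualF (flip N) b V ↔ ∀ v ∈ V, pairN N b c v := by
  cases b <;> rfl

lemma subset_coordDualF_flip_iff {b : Bool} {C : Set (coordType W U b)}
    {V : Set (coordType U W b)} :
    C ⊆ coordDualF (flip N) b V ↔ V ⊆ coordDualF N b C := by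
  cases b <;> exact ⟨fun H v hv c hc => H hc v hv, fun H c hc v hv => H hv c hc⟩

variable {ι : Type*} [DecidableEq ι] {ε : ι → Bool}

lemma setOf_update_mem_range_coordDualF_of_residual {P : (∀ i, coordType W U (ε i)) → Prop} {i : ι}
    (g : (∀ j : {j // j ≠ i}, coordType W U (ε j)) → coordType U W (ε i))
    (hg : ∀ w, P w ↔ pairN N (ε i) (w i) (g fun j => w j.1)) (w : ∀ i, coordType W U (ε i)) :
    {x | P (Function.update w i x)} ∈ Set.range (coordDualF (flip N) (ε i)) := by
  refine ⟨{g fun j => w j.1}, ?_⟩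
  ext x
  have hrest (j : {j // j ≠ i}) : Function.update w i x j.1 = w j.1 :=
    Function.update_of_ne j.2 x w
  simp only [mem_coordDualF_flip_iff, Set.mem_singleton_iff, forall_eq, Set.mem_ofPred_eq, hg,
    Function.update_self, hrest]

theorem functional_up_image_subset_rel0_general [Finite ι] {A : Type*}
    (R : A → (∀ i, coordType W U (ε i)) → Prop)
    (hR : ∀ i a w, {x | R a (Function.update w i x)} ∈ Set.range (coordDualF (flip N) (ε i)))
    {X Z : ∀ i, Set (coordType W U (ε i))}
    (hXZ : ∀ i, coordDualF N (ε i) (X i) ⊆ coordDualF N (ε i) (Z i)) :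
    {a | ∀ x ∈ Set.univ.pi X, R a x} ⊆ {a | ∀ z ∈ Set.univ.pi Z, R a z} := by
  intro a hX
  refine univ_pi_subset_of_forall_update_preimage (S := {w | R a w}) (fun i w hXi => ?_) hX
  obtain ⟨V, hV⟩ := hR i a w
  have hsection : Function.update w i ⁻¹' {w | R a w} = coordDualF (flip N) (ε i) V := hV.symm
  rw [hsection, subset_coordDualF_flip_iff] at hXi ⊢
  exact hXi.trans (hXZ i)

end CoordDual

/-- Lemma 4.7, item 1 (functional relations): if `f` admits residual functions `h_i` and
`X_i^∂ ⊆ Z_i^∂` for every `i`, then `({f(x̄) : x̄ ∈ X̄})↑ ⊆ R⁰[Z̄]`, where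
`(u, w̄) ∈ R iff (f(w̄), u) ∈ N`. -/
theorem functional_up_image_subset_rel0 {W U : Type u} (N : W → U → Prop) {n : ℕ}
    (ε : Fin n → Bool)
    (f : (∀ i, coordType W U (ε i)) → W)
    (h : ∀ i : Fin n,
      ((∀ j : {j : Fin n // j ≠ i}, coordType W U (ε j.1)) → U → coordType U W (ε i)))
    (hres : ∀ (i : Fin n) (w : ∀ j, coordType W U (ε j)) (u : U),
      N (f w) u ↔ pairN N (ε i) (w i) (h i (fun j => w j.1) u))
    (X Z : ∀ i, Set (coordType W U (ε i)))
    (hXZ : ∀ i, coordDualF N (ε i) (X i) ⊆ coordDualF N (ε i) (Z i)) :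
    up N (f '' {x | ∀ i, x i ∈ X i}) ⊆ rel0 (fun (u : U) w => N (f w) u) Z := by
  simpa only [up, rel0, Set.forall_mem_image, Set.mem_univ_pi, Set.mem_ofPred_eq] using
    functional_up_image_subset_rel0_general (fun u w => N (f w) u) (fun i u w =>
      setOf_update_mem_range_coordDualF_of_residual (h i · u) (hres i · u) w) hXZ
end

section
/- Let (W,U,N) be a polarity, ε an order type over n, and g : U^ε(1) × ⋯ × U^ε(n) → U a function admitting residual functions k_i as in the context. Let Y_i, V_i ⊆ U^ε(i) for 1 ≤ i ≤ n, and suppose Y_i^∂ ⊆ V_i^∂ for every i. Then every w ∈ W such that (w, g(ȳ)) ∈ N for all ȳ ∈ Y₁ × ⋯ × Yₙ also satisfies (w, g(v̄)) ∈ N for all v̄ ∈ V₁ × ⋯ × Vₙ; that is, ({g(ȳ) : ȳ ∈ Ȳ})↓ ⊆ R⁰[V̄], where R is the relation defined by (w, ū) ∈ R iff (w, g(ū)) ∈ N. (Lemma 4.7, item 2, for functional relations.) -/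
universe u

/-- `D^∂` for `D ⊆ U^ε(i)`: `D↓ ⊆ W` if `ε(i) = 1`, and `D↑ ⊆ U` if `ε(i) = ∂`. -/
def coordDualG {W U : Type u} (N : W → U → Prop) :
    (b : Bool) → Set (coordType U W b) → Set (coordType W U b)
  | true, Y => dn N Y
  | false, X => up N X

/-!
If `Y^∂ ⊆ V^∂`, then `V ⊆ V^∂∂ ⊆ Y^∂∂`, so every Galois-stable set (`Order.IsExtent`) containing
`Y` contains `V`. A residual `k_i` says that the sections of `R` in its `i`-th coordinate are polars
of points, hence stable. So if `(w, ȳ) ∈ R` for all `ȳ` in a box, the `i`-th side `Y_i` of that box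
may be replaced by `V_i`. Since there are finitely many coordinates, they can be treated one at a
time.
-/

open Set Function Order

theorem subset_of_isExtent_of_upperPolar_subset {α β : Type*} {r : α → β → Prop} {s t e : Set α}
    (he : IsExtent r e) (hst : upperPolar r s ⊆ upperPolar r t) (hs : s ⊆ e) : t ⊆ e :=
  calc
    t ⊆ lowerPolar r (upperPolar r t) := subset_lowerPolar_upperPolar r t
    _ ⊆ lowerPolar r (upperPolar r s) := lowerPolar_anti r hst
    _ ⊆ e := he.lowerPolar_upperPolar_subset hs

section Box

variable {ι : Type*} [DecidableEq ι] {α : ι → Type*} {P : (∀ i, α i) → Prop}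

theorem isExtent_section_of_residual {i : ι} {β : Type*} {r : α i → β → Prop}
    {k : (∀ j : {j : ι // j ≠ i}, α j.1) → β} (hk : ∀ v, P v ↔ r (v i) (k fun j => v j.1))
    (v : ∀ i, α i) : IsExtent r {x | P (update v i x)} := by
  have hrest (x : α i) :
      (fun j : {j : ι // j ≠ i} => update v i x j.1) = fun j : {j : ι // j ≠ i} => v j.1 :=
    funext fun j => update_of_ne j.2 x v
  refine ⟨{k fun j => v j.1}, ext fun x => ?_⟩
  rw [mem_lowerPolar_singleton, mem_ofPred_eq, hk, update_self, hrest]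

theorem forall_mem_pi_update_of_upperPolar_subset {i : ι} {β : Type*} {r : α i → β → Prop}
    (hP : ∀ v, IsExtent r {x | P (update v i x)}) {C : ∀ i, Set (α i)} {D : Set (α i)}
    (hCD : upperPolar r (C i) ⊆ upperPolar r D) (hC : ∀ v ∈ univ.pi C, P v) :
    ∀ v ∈ univ.pi (update C i D), P v := by
  intro v hv
  obtain ⟨hvi, hvC⟩ : v i ∈ D ∧ ∀ j ≠ i, v j ∈ C j := by
    rwa [mem_univ_pi, forall_update_iff C fun j s => v j ∈ s] at hv
  have hCi : C i ⊆ {x | P (update v i x)} := fun x hx =>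
    hC _ <| mem_univ_pi.2 <| (forall_update_iff v fun j y => y ∈ C j).2 ⟨hx, hvC⟩
  simpa only [mem_ofPred_eq, update_eq_self] using
    subset_of_isExtent_of_upperPolar_subset (hP v) hCD hCi hvi

theorem forall_mem_pi_of_upperPolar_subset [Finite ι] {β : ι → Type*} {r : ∀ i, α i → β i → Prop}
    (hP : ∀ i v, IsExtent (r i) {x | P (update v i x)}) {Y V : ∀ i, Set (α i)}
    (hYV : ∀ i, upperPolar (r i) (Y i) ⊆ upperPolar (r i) (V i)) (hY : ∀ v ∈ univ.pi Y, P v) :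
    ∀ v ∈ univ.pi V, P v := by
  have := Fintype.ofFinite ι
  suffices h : ∀ s : Finset ι, ∀ v ∈ univ.pi (s.piecewise V Y), P v by
    simpa only [Finset.piecewise_univ] using h Finset.univ
  intro s
  induction s using Finset.induction_on with
  | empty => rwa [Finset.piecewise_empty]
  | insert i s his ih =>
    rw [Finset.piecewise_insert]
    refine forall_mem_pi_update_of_upperPolar_subset (hP i) ?_ ih
    rw [Finset.piecewise_eq_of_notMem s V Y his]
    exact hYV i

end Box

theorem coordDualG_eq_upperPolar {W U : Type u} (N : W → U → Prop) (b : Bool)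
    (D : Set (coordType U W b)) : coordDualG N b D = upperPolar (pairNG N b) D := by
  cases b <;> rfl

theorem mem_rel0_iff_forall_mem_pi {A : Type u} {n : ℕ} {B : Fin n → Type u}
    {S : A → (∀ i, B i) → Prop} {C : ∀ i, Set (B i)} {a : A} :
    a ∈ rel0 S C ↔ ∀ v ∈ univ.pi C, S a v :=
  forall_congr' fun _ => imp_congr_left mem_univ_pi.symm

theorem dn_image_eq_rel0 {W U : Type u} (N : W → U → Prop) {n : ℕ} {B : Fin n → Type u}
    (g : (∀ i, B i) → U) (Y : ∀ i, Set (B i)) :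
    dn N (g '' {y | ∀ i, y i ∈ Y i}) = rel0 (fun w v => N w (g v)) Y :=
  ext fun _ => forall_mem_image

theorem functional_dn_image_subset_rel0_general {A W U : Type u} (N : W → U → Prop) {n : ℕ}
    (ε : Fin n → Bool) (R : A → (∀ i, coordType U W (ε i)) → Prop)
    (hR : ∀ a i v, IsExtent (pairNG N (ε i)) {x | R a (update v i x)})
    (Y V : ∀ i, Set (coordType U W (ε i)))
    (hYV : ∀ i, coordDualG N (ε i) (Y i) ⊆ coordDualG N (ε i) (V i)) :
    rel0 R Y ⊆ rel0 R V := by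
  simp only [coordDualG_eq_upperPolar] at hYV
  intro a ha
  rw [mem_rel0_iff_forall_mem_pi] at ha ⊢
  exact forall_mem_pi_of_upperPolar_subset (hR a) hYV ha

/-- Lemma 4.7, item 2 (functional relations): if `g` admits residual functions `k_i` and
`Y_i^∂ ⊆ V_i^∂` for every `i`, then `({g(ȳ) : ȳ ∈ Ȳ})↓ ⊆ R⁰[V̄]`, where
`(w, ū) ∈ R iff (w, g(ū)) ∈ N`. -/
theorem functional_dn_image_subset_rel0 {W U : Type u} (N : W → U → Prop) {n : ℕ}
    (ε : Fin n → Bool)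
    (g : (∀ i, coordType U W (ε i)) → U)
    (k : ∀ i : Fin n,
      ((∀ j : {j : Fin n // j ≠ i}, coordType U W (ε j.1)) → W → coordType W U (ε i)))
    (hres : ∀ (i : Fin n) (v : ∀ j, coordType U W (ε j)) (w : W),
      N w (g v) ↔ pairNG N (ε i) (v i) (k i (fun j => v j.1) w))
    (Y V : ∀ i, Set (coordType U W (ε i)))
    (hYV : ∀ i, coordDualG N (ε i) (Y i) ⊆ coordDualG N (ε i) (V i)) :
    dn N (g '' {y | ∀ i, y i ∈ Y i}) ⊆ rel0 (fun (w : W) v => N w (g v)) V := by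
  rw [dn_image_eq_rel0]
  exact functional_dn_image_subset_rel0_general N ε _
    (fun w i => isExtent_section_of_residual (k := (k i · w)) (hres i · w)) Y V hYV
end
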